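/- Let k ∈ {0,1}. Suppose m₀ is the unique maximizer of 𝑝̃ on [0,1], that L₁^{(ℓ)}(m₀) = 0 for all 0 ≤ ℓ ≤ 2k, and that L₁^{(2k+1)}(m₀) > 0. Set W = (M − N·m₀)/N^{(2k+1)/(2k+2)} and W' = (M' − N·m₀)/N^{(2k+1)/(2k+2)}, where (M,M') come from the exchangeable pair. Then E[W − W' | W] = g(W) + r(W), where g(W) = L₁^{(2k+1)}(m₀)·W^{2k+1}/((2k+1)!·N^{(2k+1)/(k+1)}) and the remainder satisfies |r(W)| ≤ K·N^{−(4k+3)/(2k+2)}·(W^{2k+2} + 1) for a constant K independent of N. -/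

import Mathlib

open Real Finset MeasureTheory

noncomputable section

/-- Dimer configurations (matchings of the complete graph on `Fin N`), encoded as
involutions of `Fin N`: fixed points are monomers, 2-cycles are dimers. -/
abbrev Dimer (N : ℕ) := {f : Fin N → Fin N // ∀ i, f (f i) = i}

/-- The set of monomers (dimer-free vertices) of a dimer configuration. -/
def monomers {N : ℕ} (D : Dimer N) : Finset (Fin N) :=
  Finset.univ.filter fun i => D.1 i = i

/-- Monomer density `m(D) = |𝓜(D)|/N`. -/
def mDim {N : ℕ} (D : Dimer N) : ℝ := ((monomers D).card : ℝ) / N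

/-- The parameter `b = (log N)/2 + h - J`. -/
def bIMD (N : ℕ) (J h : ℝ) : ℝ := Real.log N / 2 + h - J

/-- The Gibbs weight `exp(-H(D)) = exp(N (a m(D)^2 + b m(D)))` with `a = J`. -/
def wDim (N : ℕ) (J h : ℝ) (D : Dimer N) : ℝ :=
  Real.exp (N * (J * mDim D ^ 2 + bIMD N J h * mDim D))

/-- The probability of an event `A` under the IMD Gibbs measure. -/
def probDim (N : ℕ) (J h : ℝ) (A : Dimer N → Prop) : ℝ :=
  (∑ D : Dimer N, Set.indicator {D | A D} (wDim N J h) D) / ∑ D : Dimer N, wDim N J h D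

/-- The conditional probability `ℙ(A | B)` under the IMD Gibbs measure. -/
def condProbDim (N : ℕ) (J h : ℝ) (A B : Dimer N → Prop) : ℝ :=
  (∑ D : Dimer N, Set.indicator {D | A D ∧ B D} (wDim N J h) D) /
    ∑ D : Dimer N, Set.indicator {D | B D} (wDim N J h) D

/-- `g(x) = (√(e^{4x} + 4 e^{2x}) - e^{2x})/2`. -/
def gFun (x : ℝ) : ℝ := (Real.sqrt (Real.exp (4*x) + 4 * Real.exp (2*x)) - Real.exp (2*x)) / 2

/-- `τ(x) = (2x-1)J + h`. -/
def tauFun (J h x : ℝ) : ℝ := (2*x - 1) * J + h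

/-- `𝑝̃(m) = -J m² - (1 - g(τ(m)) + log(1 - g(τ(m))))/2`. -/
def ptilde (J h m : ℝ) : ℝ :=
  -J * m^2 - (1 - gFun (tauFun J h m) + Real.log (1 - gFun (tauFun J h m))) / 2

/-- The CDF of a centered Gaussian with variance `v`, evaluated at `z`. -/
def gaussCDF (v : ℝ) (z : ℝ) : ℝ :=
  (ProbabilityTheory.gaussianReal 0 (Real.toNNReal v) (Set.Iic z)).toReal

/-- Spin configurations `Σ = {0,1}^N`. -/
abbrev Config (N : ℕ) := Fin N → Bool

/-- `𝓐(σ) = {i : σ_i = 1}`. -/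
def ASet {N : ℕ} (σ : Config N) : Finset (Fin N) := Finset.univ.filter fun i => σ i = true

/-- `M(σ) = ∑ σ_i`. -/
def Msum {N : ℕ} (σ : Config N) : ℕ := (ASet σ).card

/-- Magnetization `m(σ) = M(σ)/N`. -/
def mConf {N : ℕ} (σ : Config N) : ℝ := (Msum σ : ℝ) / N

/-- `D(σ)`: the number of dimer configurations `D` with `𝓜(D) = 𝓐(σ)`. -/
def Dcount (N : ℕ) (σ : Config N) : ℕ :=
  (Finset.univ.filter fun D : Dimer N => monomers D = ASet σ).card

/-- The weight `D(σ) exp(-H(σ))` of the weighted Curie–Weiss model. -/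
def wConf (N : ℕ) (J h : ℝ) (σ : Config N) : ℝ :=
  (Dcount N σ : ℝ) * Real.exp (N * (J * mConf σ ^ 2 + bIMD N J h * mConf σ))

/-- The probability of an event `A` under the weighted Curie–Weiss Gibbs measure. -/
def probConf (N : ℕ) (J h : ℝ) (A : Config N → Prop) : ℝ :=
  (∑ σ : Config N, Set.indicator {σ | A σ} (wConf N J h) σ) / ∑ σ : Config N, wConf N J h σ

/-- Expectation under the weighted Curie–Weiss Gibbs measure. -/
def EConf (N : ℕ) (J h : ℝ) (f : Config N → ℝ) : ℝ :=
  (∑ σ : Config N, wConf N J h σ * f σ) / ∑ σ : Config N, wConf N J h σ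

/-- `L₁(m) = 2(1-m)(m² - (1-m)e^{2τ(m)})/((1-m) + e^{2τ(m)})`. -/
def Lone (J h m : ℝ) : ℝ :=
  2*(1-m)*(m^2 - (1-m)*Real.exp (2 * tauFun J h m)) / ((1-m) + Real.exp (2 * tauFun J h m))

/-- `L₂(m) = 4(1-m)(m² + (1-m)e^{2τ(m)})/((1-m) + e^{2τ(m)})`. -/
def Ltwo (J h m : ℝ) : ℝ :=
  4*(1-m)*(m^2 + (1-m)*Real.exp (2 * tauFun J h m)) / ((1-m) + Real.exp (2 * tauFun J h m))

/-- The configuration obtained from `σ` by setting the spins at `u, v` to `s, t`. -/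
def upd {N : ℕ} (σ : Config N) (u v : Fin N) (s t : Bool) : Config N :=
  fun i => if i = u then s else if i = v then t else σ i

/-- The edges of the complete graph, enumerated as ordered pairs `u < v`. -/
def cEdges (N : ℕ) : Finset (Fin N × Fin N) := Finset.univ.filter fun p => p.1 < p.2

/-- The probability of resampling the pair of spins at `(u,v)` to `(s,t)`:
the conditional distribution of `(σ_u, σ_v)` given `(σ_i)_{i ≠ u,v}`. -/
def qCond (N : ℕ) (J h : ℝ) (σ : Config N) (u v : Fin N) (s t : Bool) : ℝ :=
  wConf N J h (upd σ u v s t) / ∑ st : Bool × Bool, wConf N J h (upd σ u v st.1 st.2)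

/-- `E[F(σ, σ') | σ]` for the exchangeable pair `(σ, σ')` obtained by resampling the
spins at a uniformly chosen edge. -/
def condE2 (N : ℕ) (J h : ℝ) (F : Config N → Config N → ℝ) (σ : Config N) : ℝ :=
  ((cEdges N).card : ℝ)⁻¹ * ∑ p ∈ cEdges N, ∑ st : Bool × Bool,
    qCond N J h σ p.1 p.2 st.1 st.2 * F σ (upd σ p.1 p.2 st.1 st.2)

/-- The weight of the Gibbs measure conditioned on the event `S`. -/
def wCond (N : ℕ) (J h : ℝ) (S : Config N → Prop) (σ : Config N) : ℝ :=
  Set.indicator {σ | S σ} (wConf N J h) σ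

/-- `ℙ_ℓ(A) = ℙ(A | S)`, probability under the conditioned Gibbs measure. -/
def probL (N : ℕ) (J h : ℝ) (S A : Config N → Prop) : ℝ :=
  (∑ σ : Config N, Set.indicator {σ | A σ} (wCond N J h S) σ) / ∑ σ : Config N, wCond N J h S σ

/-- Expectation under the conditioned Gibbs measure `ℙ(·|S)`. -/
def EL (N : ℕ) (J h : ℝ) (S : Config N → Prop) (f : Config N → ℝ) : ℝ :=
  (∑ σ : Config N, wCond N J h S σ * f σ) / ∑ σ : Config N, wCond N J h S σ

/-- Resampling probability for the conditioned measure `ℙ(·|S)`. -/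
def qCondL (N : ℕ) (J h : ℝ) (S : Config N → Prop) (σ : Config N) (u v : Fin N)
    (s t : Bool) : ℝ :=
  wCond N J h S (upd σ u v s t) / ∑ st : Bool × Bool, wCond N J h S (upd σ u v st.1 st.2)

/-- `E_ℓ[F(σ, σ') | σ]` for the exchangeable pair under the conditioned measure. -/
def condE2L (N : ℕ) (J h : ℝ) (S : Config N → Prop) (F : Config N → Config N → ℝ)
    (σ : Config N) : ℝ :=
  ((cEdges N).card : ℝ)⁻¹ * ∑ p ∈ cEdges N, ∑ st : Bool × Bool,
    qCondL N J h S σ p.1 p.2 st.1 st.2 * F σ (upd σ p.1 p.2 st.1 st.2)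

/-- The maximizer set `O` of `𝑝̃` on `[0,1]`. -/
def maxSet (J h : ℝ) : Set ℝ :=
  {x | x ∈ Set.Icc (0:ℝ) 1 ∧ ∀ y ∈ Set.Icc (0:ℝ) 1, ptilde J h y ≤ ptilde J h x}

end

/-!
The weight of `σ` depends only on `M`, through the number `p (N - M)` of perfect matchings of the
`N - M` covered sites, where `p n = 0` for odd `n` and `p (n + 2) = (n + 1) * p n`. By parity,
resampling an edge with one monomer changes nothing, while an edge with two or no monomers becomes
covered with probability `coverProb` at the midpoint density, in which the factor `N` of the
recursion cancels the term `log N / 2` of `b`. Averaging over the edges yields `E[M - M' | σ]` as an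
explicit function of `m = M / N`, within `O(1 / N)` of `L₁ m`, and what remains is the Taylor
expansion of `L₁` at `m₀`, rescaled.
-/

/-- The number of perfect matchings of `n` points. The recursion chooses the partner of one of
them. -/
def pairingCount : ℕ → ℕ
  | 0 => 1
  | 1 => 0
  | n + 2 => (n + 1) * pairingCount n

lemma pairingCount_pos_of_even : ∀ {n : ℕ}, Even n → 0 < pairingCount n
  | 0, _ => Nat.one_pos
  | 1, h => absurd h Nat.not_even_one
  | n + 2, h => Nat.mul_pos n.succ_pos (pairingCount_pos_of_even ((Nat.even_add_one.trans
      (by simp [Nat.even_add_one])).1 h))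

lemma pairingCount_eq_zero_of_odd : ∀ {n : ℕ}, Odd n → pairingCount n = 0
  | 0, h => absurd h Nat.not_odd_zero
  | 1, _ => rfl
  | n + 2, h => by
    rw [pairingCount, pairingCount_eq_zero_of_odd (by grind : Odd n), mul_zero]

section Dimer

variable {N : ℕ}

lemma Dimer.injective (D : Dimer N) : Function.Injective D.1 :=
  Function.Involutive.injective D.2

/-- The configuration obtained from `D` by removing the dimer `uw` if it is present, and by adding
it if `u` and `w` are monomers. The hypothesis says that `D` permutes `{u, w}`, hence commutes with
the transposition of `u` and `w`. -/
def Dimer.toggle (D : Dimer N) (u w : Fin N)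
    (h : Equiv.swap (D.1 u) (D.1 w) = Equiv.swap u w) : Dimer N :=
  ⟨fun i => D.1 (Equiv.swap u w i), fun i => by
    simp only [D.injective.map_swap, h, D.2, Equiv.swap_apply_self]⟩

lemma Dimer.swap_apply_eq_of_apply_eq {D : Dimer N} {u w : Fin N} (h : D.1 u = w) :
    Equiv.swap (D.1 u) (D.1 w) = Equiv.swap u w := by
  rw [← h, D.2, Equiv.swap_comm]

lemma Dimer.swap_apply_eq_of_mem_monomers {D : Dimer N} {u w : Fin N} (hu : u ∈ monomers D)
    (hw : w ∈ monomers D) : Equiv.swap (D.1 u) (D.1 w) = Equiv.swap u w := by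
  rw [(mem_filter.1 hu).2, (mem_filter.1 hw).2]

lemma card_filter_apply_eq_of_monomers_eq {A : Finset (Fin N)} {u w : Fin N} (hu : u ∉ A)
    (hw : w ∉ A) (huw : u ≠ w) :
    #{D : Dimer N | monomers D = A ∧ D.1 u = w} =
      #{D : Dimer N | monomers D = insert u (insert w A)} := by
  have hmem : ∀ D ∈ ({D | monomers D = insert u (insert w A)} : Finset (Dimer N)),
      u ∈ monomers D ∧ w ∈ monomers D := by
    simp +contextual
  refine card_bij'
    (fun D hD => D.toggle u w (Dimer.swap_apply_eq_of_apply_eq (mem_filter.1 hD).2.2))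
    (fun D hD => D.toggle u w (Dimer.swap_apply_eq_of_mem_monomers (hmem D hD).1 (hmem D hD).2))
    (fun D hD => ?_) (fun D hD => ?_) (fun D hD => ?_) (fun D hD => ?_)
  · have h := D.2 u
    simp only [mem_filter, mem_univ, true_and, monomers, Finset.ext_iff, Dimer.toggle] at hD ⊢
    intro i
    grind
  · simp only [mem_filter, mem_univ, true_and, monomers, Finset.ext_iff, Dimer.toggle] at hD ⊢
    refine ⟨fun i => ?_, ?_⟩ <;> grind
  · ext i; simp [Dimer.toggle]
  · ext i; simp [Dimer.toggle]

lemma card_filter_monomers_eq_sum {A : Finset (Fin N)} {u : Fin N} (hu : u ∉ A) :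
    #{D : Dimer N | monomers D = A} =
      ∑ w ∈ Aᶜ.erase u, #{D : Dimer N | monomers D = insert u (insert w A)} := by
  have hpartner : ∀ D ∈ ({D | monomers D = A} : Finset (Dimer N)), D.1 u ∈ Aᶜ.erase u := by
    intro D hD
    have h := D.2 u
    simp only [mem_filter, mem_univ, true_and, monomers, Finset.ext_iff, mem_erase,
      mem_compl] at hD ⊢
    grind
  rw [card_eq_sum_card_fiberwise hpartner]
  refine sum_congr rfl fun w hw => ?_
  rw [mem_erase, mem_compl] at hw
  rw [filter_filter, card_filter_apply_eq_of_monomers_eq hu hw.2 hw.1.symm]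

lemma card_filter_monomers_eq (A : Finset (Fin N)) :
    #{D : Dimer N | monomers D = A} = pairingCount #Aᶜ := by
  generalize hn : #Aᶜ = n
  induction n using Nat.strong_induction_on generalizing A with
  | _ n ih =>
    rcases Aᶜ.eq_empty_or_nonempty with hA | ⟨u, hu⟩
    · obtain rfl : A = univ := by simpa using hA
      obtain rfl : n = 0 := by simpa using hn.symm
      refine card_eq_one.2 ⟨⟨id, fun _ => rfl⟩, ?_⟩
      ext D
      simp [monomers, Subtype.ext_iff, funext_iff, Finset.ext_iff]
    · have hn0 : 0 < n := hn ▸ card_pos.2 ⟨u, hu⟩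
      have hterm : ∀ w ∈ Aᶜ.erase u,
          #{D : Dimer N | monomers D = insert u (insert w A)} = pairingCount (n - 2) := by
        intro w hw
        have hcompl : (insert u (insert w A))ᶜ = (Aᶜ.erase u).erase w := by
          simp only [compl_insert, erase_right_comm]
        refine ih _ (by lia) _ ?_
        rw [hcompl, card_erase_of_mem hw, card_erase_of_mem hu, hn, Nat.sub_sub]
      rw [card_filter_monomers_eq_sum (mem_compl.1 hu), sum_congr rfl hterm, sum_const,
        card_erase_of_mem hu, hn, smul_eq_mul]
      match n, hn0 with
      | 1, _ => exact Nat.zero_mul _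
      | _ + 2, _ => rfl

end Dimer

lemma Msum_le {N : ℕ} (σ : Config N) : Msum σ ≤ N :=
  (card_le_univ (ASet σ)).trans_eq (Fintype.card_fin N)

lemma Dcount_eq_pairingCount (N : ℕ) (σ : Config N) : Dcount N σ = pairingCount (N - Msum σ) := by
  rw [Dcount, card_filter_monomers_eq, card_compl, Fintype.card_fin, Msum]

/-- The Gibbs weight of a configuration with `M` monomers. -/
noncomputable def levelWeight (N : ℕ) (J h : ℝ) (M : ℕ) : ℝ :=
  pairingCount (N - M) * exp (N * (J * (M / N) ^ 2 + bIMD N J h * (M / N)))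

/-- The conditional probability that two resampled sites both end up covered by dimers, when parity
forces them to be both monomers or both covered. Here `a` is the mean of the monomer densities of
these two outcomes. -/
noncomputable def coverProb (J h a : ℝ) : ℝ := (1 - a) / ((1 - a) + exp (2 * tauFun J h a))

section LevelWeight

variable {N : ℕ} {J h : ℝ}

lemma wConf_eq_levelWeight (σ : Config N) : wConf N J h σ = levelWeight N J h (Msum σ) := by
  rw [wConf, levelWeight, Dcount_eq_pairingCount, mConf]

lemma levelWeight_eq_zero_of_odd {M : ℕ} (hM : Odd (N - M)) : levelWeight N J h M = 0 := by
  rw [levelWeight, pairingCount_eq_zero_of_odd hM, Nat.cast_zero, zero_mul]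

lemma levelWeight_pos_of_even {M : ℕ} (hM : Even (N - M)) : 0 < levelWeight N J h M :=
  mul_pos (Nat.cast_pos.2 (pairingCount_pos_of_even hM)) (exp_pos _)

lemma even_sub_Msum {σ : Config N} (hσ : wConf N J h σ ≠ 0) : Even (N - Msum σ) := by
  contrapose! hσ
  rw [wConf_eq_levelWeight, levelWeight_eq_zero_of_odd (Nat.not_even_iff_odd.1 hσ)]

lemma levelWeight_mul_exp {A : ℕ} (hA : A + 2 ≤ N) :
    levelWeight N J h A * exp (2 * tauFun J h ((A + 1) / N)) =
      levelWeight N J h (A + 2) * (1 - (A + 1) / N) := by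
  obtain ⟨n, rfl⟩ := Nat.exists_eq_add_of_le hA
  have hN : (0 : ℝ) < (A + 2 + n : ℕ) := by positivity
  have hpairing : (pairingCount (A + 2 + n - A) : ℝ) =
      (1 - (A + 1) / (A + 2 + n : ℕ)) * (A + 2 + n : ℕ) * pairingCount n := by
    rw [add_assoc, Nat.add_sub_cancel_left, add_comm 2 n, pairingCount]
    push_cast
    field_simp
    ring
  have hexp : (A + 2 + n : ℕ) * exp ((A + 2 + n : ℕ) * (J * (A / (A + 2 + n : ℕ)) ^ 2 +
      bIMD (A + 2 + n) J h * (A / (A + 2 + n : ℕ)))) *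
        exp (2 * tauFun J h ((A + 1) / (A + 2 + n : ℕ))) =
      exp ((A + 2 + n : ℕ) * (J * ((A + 2 : ℕ) / (A + 2 + n : ℕ)) ^ 2 +
        bIMD (A + 2 + n) J h * ((A + 2 : ℕ) / (A + 2 + n : ℕ)))) := by
    conv_lhs => enter [1, 1]; rw [← exp_log hN]
    rw [← exp_add, ← exp_add, bIMD, tauFun]
    congr 1
    generalize log _ = l
    push_cast
    field_simp
    ring
  rw [levelWeight, levelWeight, hpairing, ← hexp, Nat.add_sub_cancel_left]
  ring

lemma levelWeight_div_add {A : ℕ} (hA : A + 2 ≤ N) (heven : Even (N - A)) :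
    levelWeight N J h A / (levelWeight N J h A + levelWeight N J h (A + 2)) =
      coverProb J h ((A + 1) / N) := by
  have hN : (0 : ℝ) < N := by exact_mod_cast (by lia : 0 < N)
  have ha : 0 < 1 - ((A : ℝ) + 1) / N := by
    rw [sub_pos, div_lt_one hN]
    exact_mod_cast hA
  have hw : 0 < levelWeight N J h A := levelWeight_pos_of_even heven
  have hw' : 0 < levelWeight N J h (A + 2) := levelWeight_pos_of_even (by grind)
  rw [coverProb, div_eq_div_iff (by positivity) (by positivity)]
  linear_combination levelWeight_mul_exp (J := J) (h := h) hA

end LevelWeight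

section EdgeDrop

variable {N : ℕ} {J h : ℝ} {σ : Config N} {u v : Fin N}

lemma Msum_eq_sum (σ : Config N) : Msum σ = ∑ i, (σ i).toNat := by
  rw [Msum, ASet, card_filter]
  exact sum_congr rfl fun i _ => by cases σ i <;> rfl

lemma Msum_upd (σ : Config N) (huv : u ≠ v) (s t : Bool) :
    Msum (upd σ u v s t) + ((σ u).toNat + (σ v).toNat) = Msum σ + (s.toNat + t.toNat) := by
  have hsplit (ρ : Config N) : Msum ρ =
      (ρ u).toNat + ((ρ v).toNat + ∑ i ∈ (univ.erase u).erase v, (ρ i).toNat) := by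
    rw [Msum_eq_sum, ← add_sum_erase _ _ (mem_univ u),
      ← add_sum_erase _ _ (mem_erase.2 ⟨huv.symm, mem_univ v⟩)]
  have hrest : ∑ i ∈ (univ.erase u).erase v, (upd σ u v s t i).toNat =
      ∑ i ∈ (univ.erase u).erase v, (σ i).toNat := by
    refine sum_congr rfl fun i hi => ?_
    simp only [mem_erase] at hi
    rw [upd, if_neg hi.2.1, if_neg hi.1]
  rw [hsplit (upd σ u v s t), hsplit σ, hrest, upd, upd, if_pos rfl, if_neg huv.symm, if_pos rfl]
  ring

/-- The conditional mean of `M - M'` given `σ` and the resampled edge `uv`. -/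
noncomputable def edgeDrop (N : ℕ) (J h : ℝ) (σ : Config N) (u v : Fin N) : ℝ :=
  ∑ st : Bool × Bool,
    qCond N J h σ u v st.1 st.2 * ((Msum σ : ℝ) - Msum (upd σ u v st.1 st.2))

lemma edgeDrop_eq (huv : u ≠ v) {A : ℕ} (hA : Msum σ = A + ((σ u).toNat + (σ v).toNat)) :
    edgeDrop N J h σ u v =
      (levelWeight N J h A * (Msum σ - A) + 2 * levelWeight N J h (A + 1) * (Msum σ - (A + 1)) +
        levelWeight N J h (A + 2) * (Msum σ - (A + 2))) /
      (levelWeight N J h A + 2 * levelWeight N J h (A + 1) + levelWeight N J h (A + 2)) := by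
  have hM (s t : Bool) : Msum (upd σ u v s t) = A + (s.toNat + t.toNat) := by
    have := Msum_upd σ huv s t
    lia
  simp only [edgeDrop, qCond, wConf_eq_levelWeight, Fintype.sum_prod_type, Fintype.sum_bool, hM,
    Bool.toNat_true, Bool.toNat_false, zero_add, add_zero, Nat.reduceAdd]
  push_cast
  ring

lemma edgeDrop_of_even (huv : u ≠ v) {A : ℕ} (hA : Msum σ = A + ((σ u).toNat + (σ v).toNat))
    (hAN : A + 2 ≤ N) (heven : Even (N - A)) :
    edgeDrop N J h σ u v = Msum σ - (A + 2) + 2 * coverProb J h ((A + 1) / N) := by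
  have hw : 0 < levelWeight N J h A := levelWeight_pos_of_even heven
  have hw' : 0 < levelWeight N J h (A + 2) := levelWeight_pos_of_even (by grind)
  rw [edgeDrop_eq huv hA, levelWeight_eq_zero_of_odd (M := A + 1) (by grind),
    ← levelWeight_div_add hAN heven]
  field_simp
  ring

lemma edgeDrop_of_odd (huv : u ≠ v) {A : ℕ} (hA : Msum σ = A + ((σ u).toNat + (σ v).toNat))
    (hAN : A + 2 ≤ N) (hodd : Odd (N - A)) :
    edgeDrop N J h σ u v = Msum σ - (A + 1) := by
  have hw : 0 < levelWeight N J h (A + 1) := levelWeight_pos_of_even (by grind)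
  rw [edgeDrop_eq huv hA, levelWeight_eq_zero_of_odd hodd,
    levelWeight_eq_zero_of_odd (M := A + 2) (by grind)]
  field_simp
  ring

lemma exists_Msum_eq_add (huv : u ≠ v) :
    ∃ A, Msum σ = A + ((σ u).toNat + (σ v).toNat) ∧ A + 2 ≤ N := by
  have hff := Msum_upd σ huv false false
  have htt := Msum_upd σ huv true true
  have hle := Msum_le (upd σ u v true true)
  simp only [Bool.toNat_true, Bool.toNat_false] at hff htt
  exact ⟨Msum (upd σ u v false false), by lia, by lia⟩

lemma edgeDrop_of_ne (hσ : wConf N J h σ ≠ 0) (huv : u ≠ v) (hne : σ u ≠ σ v) :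
    edgeDrop N J h σ u v = 0 := by
  obtain ⟨A, hA, hAN⟩ := exists_Msum_eq_add (σ := σ) huv
  have heven := even_sub_Msum hσ
  have hsum : (σ u).toNat + (σ v).toNat = 1 := by
    cases hu : σ u <;> cases hv : σ v <;> simp_all
  rw [edgeDrop_of_odd huv hA hAN (by grind), hA, hsum, Nat.cast_add_one, sub_self]

lemma edgeDrop_of_true (hσ : wConf N J h σ ≠ 0) (huv : u ≠ v) (hu : σ u = true)
    (hv : σ v = true) : edgeDrop N J h σ u v = 2 * coverProb J h (mConf σ - 1 / N) := by
  obtain ⟨A, hA, hAN⟩ := exists_Msum_eq_add (σ := σ) huv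
  have heven := even_sub_Msum hσ
  have hM : Msum σ = A + 2 := by rw [hA, hu, hv]; rfl
  rw [edgeDrop_of_even huv hA hAN (by grind), mConf, hM]
  push_cast
  ring_nf

lemma edgeDrop_of_false (hσ : wConf N J h σ ≠ 0) (huv : u ≠ v) (hu : σ u = false)
    (hv : σ v = false) :
    edgeDrop N J h σ u v = -(2 * (1 - coverProb J h (mConf σ + 1 / N))) := by
  obtain ⟨A, hA, hAN⟩ := exists_Msum_eq_add (σ := σ) huv
  have heven := even_sub_Msum hσ
  have hM : Msum σ = A := by rw [hA, hu, hv]; rfl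
  rw [edgeDrop_of_even huv hA hAN (by grind), mConf, hM]
  ring_nf

end EdgeDrop

/-- The fraction of the edges of the complete graph on `N` vertices that lie inside a set of `N x`
vertices, for `2 ≤ N`. -/
noncomputable def pairDensity (N : ℕ) (x : ℝ) : ℝ := x * (N * x - 1) / (N - 1)

lemma card_filter_cEdges {N : ℕ} (S : Finset (Fin N)) :
    #{p ∈ cEdges N | p.1 ∈ S ∧ p.2 ∈ S} = (#S).choose 2 := by
  rw [← card_powersetCard]
  refine card_bij (fun p _ => {p.1, p.2}) (fun p hp => ?_) (fun p hp q hq hpq => ?_)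
    (fun T hT => ?_)
  · simp only [cEdges, mem_filter, mem_univ, true_and] at hp
    grind [card_pair]
  · simp only [cEdges, mem_filter, mem_univ, true_and] at hp hq
    simp only [← coe_inj, coe_pair, Set.pair_eq_pair_iff] at hpq
    grind
  · obtain ⟨hTS, hcard⟩ := mem_powersetCard.1 hT
    obtain ⟨u, v, huv, rfl⟩ := card_eq_two.1 hcard
    rcases huv.lt_or_gt with h | h
    · exact ⟨(u, v), by grind [cEdges], rfl⟩
    · exact ⟨(v, u), by grind [cEdges], pair_comm v u⟩

lemma inv_card_cEdges_mul_card_filter {N : ℕ} (hN : N ≠ 0) (S : Finset (Fin N)) :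
    (#(cEdges N) : ℝ)⁻¹ * #{p ∈ cEdges N | p.1 ∈ S ∧ p.2 ∈ S} = pairDensity N (#S / N) := by
  have hcard : #(cEdges N) = N.choose 2 := by
    simpa using card_filter_cEdges (univ : Finset (Fin N))
  have hN' : (N : ℝ) ≠ 0 := Nat.cast_ne_zero.2 hN
  rw [card_filter_cEdges, hcard, Nat.cast_choose_two, Nat.cast_choose_two, pairDensity]
  rcases eq_or_ne (N : ℝ) 1 with h1 | h1
  · simp [h1]
  · have := sub_ne_zero.2 h1
    field_simp

/-- The conditional mean of `M - M'` given that the monomer density is `m`. The first term comes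
from the resampled edges inside the set of monomers, the second from those outside it. -/
noncomputable def meanDrop (J h : ℝ) (N : ℕ) (m : ℝ) : ℝ :=
  2 * (pairDensity N m * coverProb J h (m - 1 / N) -
    pairDensity N (1 - m) * (1 - coverProb J h (m + 1 / N)))

section CondE2

variable {N : ℕ} {J h : ℝ} {σ : Config N}

lemma edgeDrop_eq_ite (hσ : wConf N J h σ ≠ 0) {u v : Fin N} (huv : u ≠ v) :
    edgeDrop N J h σ u v =
      (if u ∈ ASet σ ∧ v ∈ ASet σ then 2 * coverProb J h (mConf σ - 1 / N) else 0) -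
        if u ∈ (ASet σ)ᶜ ∧ v ∈ (ASet σ)ᶜ then 2 * (1 - coverProb J h (mConf σ + 1 / N)) else 0 := by
  cases hu : σ u <;> cases hv : σ v
  · simp [ASet, hu, hv, edgeDrop_of_false hσ huv hu hv]
  · simp [ASet, hu, hv, edgeDrop_of_ne hσ huv (by simp [hu, hv])]
  · simp [ASet, hu, hv, edgeDrop_of_ne hσ huv (by simp [hu, hv])]
  · simp [ASet, hu, hv, edgeDrop_of_true hσ huv hu hv]

lemma condE2_Msum (hN : N ≠ 0) (hσ : wConf N J h σ ≠ 0) :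
    condE2 N J h (fun σ σ' => (Msum σ : ℝ) - Msum σ') σ = meanDrop J h N (mConf σ) := by
  have hcompl : (#(ASet σ)ᶜ : ℝ) / N = 1 - mConf σ := by
    rw [card_compl, Fintype.card_fin, ← Msum, Nat.cast_sub (Msum_le σ), sub_div,
      div_self (Nat.cast_ne_zero.2 hN), mConf]
  calc condE2 N J h (fun σ σ' => (Msum σ : ℝ) - Msum σ') σ
      = (#(cEdges N) : ℝ)⁻¹ * ∑ p ∈ cEdges N, edgeDrop N J h σ p.1 p.2 := rfl
    _ = (#(cEdges N) : ℝ)⁻¹ * #{p ∈ cEdges N | p.1 ∈ ASet σ ∧ p.2 ∈ ASet σ} *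
            (2 * coverProb J h (mConf σ - 1 / N)) -
          (#(cEdges N) : ℝ)⁻¹ * #{p ∈ cEdges N | p.1 ∈ (ASet σ)ᶜ ∧ p.2 ∈ (ASet σ)ᶜ} *
            (2 * (1 - coverProb J h (mConf σ + 1 / N))) := by
        rw [sum_congr rfl fun p hp => edgeDrop_eq_ite hσ (mem_filter.1 hp).2.ne, sum_sub_distrib,
          ← sum_filter, ← sum_filter, sum_const, sum_const, nsmul_eq_mul, nsmul_eq_mul]
        ring
    _ = meanDrop J h N (mConf σ) := by
        rw [inv_card_cEdges_mul_card_filter hN, inv_card_cEdges_mul_card_filter hN, hcompl,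
          meanDrop, mConf, Msum]
        ring

lemma condE2_div (F : Config N → Config N → ℝ) (c : ℝ) :
    condE2 N J h (fun σ σ' => F σ σ' / c) σ = condE2 N J h F σ / c := by
  simp only [condE2, mul_div_assoc, sum_div]

end CondE2

lemma mConf_mem_Icc {N : ℕ} (σ : Config N) : mConf σ ∈ Set.Icc (0 : ℝ) 1 :=
  ⟨by unfold mConf; positivity,
    div_le_one_of_le₀ (Nat.cast_le.2 (Msum_le σ)) (Nat.cast_nonneg N)⟩

section Estimates

variable {N : ℕ} {x : ℝ}

lemma abs_pairDensity_sub_sq_le (hN : N ≠ 0) (hx : x ∈ Set.Icc (0 : ℝ) 1) :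
    |pairDensity N x - x ^ 2| ≤ 1 / N := by
  obtain ⟨hx0, hx1⟩ := hx
  rcases Nat.lt_or_ge 1 N with h2 | h1
  · have hN2 : (2 : ℝ) ≤ N := by exact_mod_cast h2
    have hN1 : (0 : ℝ) < N - 1 := by linarith
    have hdiff : pairDensity N x - x ^ 2 = -(x * (1 - x) / (N - 1)) := by
      rw [pairDensity]
      field_simp
      ring
    rw [hdiff, abs_neg, abs_of_nonneg (by positivity), div_le_div_iff₀ hN1 (by linarith)]
    nlinarith [sq_nonneg (2 * x - 1)]
  · obtain rfl : N = 1 := by lia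
    simpa [pairDensity, abs_of_nonneg hx0] using hx1

lemma abs_pairDensity_mul_sub_sq_mul_le {p q K : ℝ} (hN : N ≠ 0) (hx : x ∈ Set.Icc (0 : ℝ) 1)
    (hp : p ∈ Set.Icc (0 : ℝ) 1) (hK : 0 ≤ K) (hpq : x ≠ 0 → |q - p| ≤ K / N) :
    |pairDensity N x * q - x ^ 2 * p| ≤ (1 + 2 * K) / N := by
  rcases eq_or_ne x 0 with rfl | hx0
  · simp only [pairDensity, zero_mul, zero_div, ne_eq, OfNat.ofNat_ne_zero, not_false_eq_true,
      zero_pow, sub_zero, abs_zero]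
    positivity
  have hpair : |pairDensity N x - x ^ 2| ≤ 1 / N := abs_pairDensity_sub_sq_le hN hx
  have hN1 : 1 / (N : ℝ) ≤ 1 := by simpa only [one_div] using Nat.cast_inv_le_one N
  have hpair2 : |pairDensity N x| ≤ 2 := by
    rw [abs_le] at hpair ⊢
    constructor <;> nlinarith [hx.1, hx.2]
  calc |pairDensity N x * q - x ^ 2 * p|
      = |(pairDensity N x - x ^ 2) * p + pairDensity N x * (q - p)| := by ring_nf
    _ ≤ |pairDensity N x - x ^ 2| * |p| + |pairDensity N x| * |q - p| := by
        rw [← abs_mul, ← abs_mul]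
        exact abs_add_le _ _
    _ ≤ 1 / N * 1 + 2 * (K / N) := by
        gcongr
        · exact abs_le.2 ⟨by linarith [hp.1], hp.2⟩
        · exact hpq hx0
    _ = (1 + 2 * K) / N := by ring

end Estimates

lemma coverProb_mem_Icc (J h : ℝ) {a : ℝ} (ha : a ≤ 1) : coverProb J h a ∈ Set.Icc (0 : ℝ) 1 := by
  have hexp := exp_pos (2 * tauFun J h a)
  rw [coverProb]
  exact ⟨div_nonneg (by linarith) (by linarith), div_le_one_of_le₀ (by linarith) (by linarith)⟩

lemma Lone_eq (J h : ℝ) {m : ℝ} (hm : m ≤ 1) :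
    Lone J h m = 2 * (m ^ 2 * coverProb J h m - (1 - m) ^ 2 * (1 - coverProb J h m)) := by
  have hden : (1 - m) + exp (2 * tauFun J h m) ≠ 0 := by
    have := exp_pos (2 * tauFun J h m)
    linarith
  rw [Lone, coverProb]
  field_simp
  ring

lemma contDiffAt_coverProb (J h : ℝ) (n : WithTop ℕ∞) {a : ℝ} (ha : a ≤ 1) :
    ContDiffAt ℝ n (coverProb J h) a := by
  have hden : (1 - a) + exp (2 * tauFun J h a) ≠ 0 := by
    have := exp_pos (2 * tauFun J h a)
    linarith
  unfold coverProb
  unfold tauFun at *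
  exact ContDiffAt.div (by fun_prop) (by fun_prop) hden

lemma contDiffAt_Lone (J h : ℝ) (n : WithTop ℕ∞) {m : ℝ} (hm : m ≤ 1) :
    ContDiffAt ℝ n (Lone J h) m := by
  have hden : (1 - m) + exp (2 * tauFun J h m) ≠ 0 := by
    have := exp_pos (2 * tauFun J h m)
    linarith
  unfold Lone
  unfold tauFun at *
  exact ContDiffAt.div (by fun_prop) (by fun_prop) hden

lemma exists_lipschitzOnWith_coverProb (J h : ℝ) :
    ∃ K, LipschitzOnWith K (coverProb J h) (Set.Icc 0 1) :=
  ContDiffOn.exists_lipschitzOnWith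
    (fun _ ha => (contDiffAt_coverProb J h 1 ha.2).contDiffWithinAt) one_ne_zero
    (convex_Icc 0 1) isCompact_Icc

section MonomerDensity

variable {N : ℕ} {σ : Config N}

lemma mConf_sub_one_div_mem_Icc (hσ : mConf σ ≠ 0) : mConf σ - 1 / N ∈ Set.Icc (0 : ℝ) 1 := by
  have hM : Msum σ ≠ 0 := by
    intro h
    simp [mConf, h] at hσ
  have hnonneg : 0 ≤ (1 : ℝ) / N := by positivity
  refine ⟨sub_nonneg.2 ?_, by linarith [(mConf_mem_Icc σ).2]⟩
  rw [mConf]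
  gcongr
  exact_mod_cast Nat.one_le_iff_ne_zero.2 hM

lemma mConf_add_one_div_mem_Icc (hN : N ≠ 0) (hσ : mConf σ ≠ 1) :
    mConf σ + 1 / N ∈ Set.Icc (0 : ℝ) 1 := by
  have hN' : (N : ℝ) ≠ 0 := Nat.cast_ne_zero.2 hN
  have hM : Msum σ ≠ N := by
    intro h
    simp [mConf, h, hN'] at hσ
  have hnonneg : 0 ≤ (1 : ℝ) / N := by positivity
  refine ⟨by linarith [(mConf_mem_Icc σ).1], ?_⟩
  rw [mConf, ← add_div]
  exact div_le_one_of_le₀ (by exact_mod_cast (Msum_le σ).lt_of_ne hM) (by positivity)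

lemma exists_abs_meanDrop_sub_Lone_le (J h : ℝ) : ∃ C : ℝ, 0 ≤ C ∧ ∀ N : ℕ, N ≠ 0 →
    ∀ σ : Config N, |meanDrop J h N (mConf σ) - Lone J h (mConf σ)| ≤ C / N := by
  obtain ⟨K, hK⟩ := exists_lipschitzOnWith_coverProb J h
  refine ⟨4 * (1 + 2 * K), by positivity, fun N hN σ => ?_⟩
  have hm := mConf_mem_Icc σ
  have hp := coverProb_mem_Icc J h hm.2
  have hinside : |pairDensity N (mConf σ) * coverProb J h (mConf σ - 1 / N) -
      mConf σ ^ 2 * coverProb J h (mConf σ)| ≤ (1 + 2 * (K : ℝ)) / N := by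
    refine abs_pairDensity_mul_sub_sq_mul_le hN hm hp K.2 fun hm0 => ?_
    have := hK.dist_le_mul _ (mConf_sub_one_div_mem_Icc hm0) _ hm
    simpa [Real.dist_eq, div_eq_mul_inv] using this
  have houtside : |pairDensity N (1 - mConf σ) * (1 - coverProb J h (mConf σ + 1 / N)) -
      (1 - mConf σ) ^ 2 * (1 - coverProb J h (mConf σ))| ≤ (1 + 2 * (K : ℝ)) / N := by
    refine abs_pairDensity_mul_sub_sq_mul_le hN (Set.Icc.one_sub_mem hm)
      (Set.Icc.one_sub_mem hp) K.2 fun hm1 => ?_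
    have := hK.dist_le_mul _ hm _ (mConf_add_one_div_mem_Icc hN (sub_ne_zero.1 hm1).symm)
    simpa [Real.dist_eq, div_eq_mul_inv] using this
  rw [Lone_eq J h hm.2, meanDrop, ← mul_sub, mul_div_assoc]
  rw [abs_le] at hinside houtside ⊢
  constructor <;> linarith [hinside.1, hinside.2, houtside.1, houtside.2]

end MonomerDensity

section Taylor

variable {f : ℝ → ℝ} {n : ℕ} {s : Set ℝ} {x₀ : ℝ}

lemma taylorWithinEval_eq_monomial (hs : UniqueDiffOn ℝ s) (hx₀ : x₀ ∈ s)
    (hf : ContDiffAt ℝ n f x₀) (hder : ∀ l < n, iteratedDeriv l f x₀ = 0) (x : ℝ) :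
    taylorWithinEval f n s x₀ x = iteratedDeriv n f x₀ / n.factorial * (x - x₀) ^ n := by
  have hwithin : ∀ l ≤ n, iteratedDerivWithin l f s x₀ = iteratedDeriv l f x₀ := fun l hl =>
    iteratedDerivWithin_eq_iteratedDeriv hs (hf.of_le (by exact_mod_cast hl)) hx₀
  have hlower : ∀ l ∈ range n,
      ((l.factorial : ℝ)⁻¹ * (x - x₀) ^ l) • iteratedDerivWithin l f s x₀ = 0 := by
    intro l hl
    rw [hwithin l (mem_range.1 hl).le, hder l (mem_range.1 hl), smul_zero]
  rw [taylor_within_apply, sum_range_succ, sum_eq_zero hlower, hwithin n le_rfl, smul_eq_mul]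
  ring

lemma exists_abs_sub_monomial_le (hs : IsCompact s) [s.OrdConnected] (hx₀ : x₀ ∈ s)
    (hf : ∀ x ∈ s, ContDiffAt ℝ (n + 1) f x) (hder : ∀ l < n, iteratedDeriv l f x₀ = 0) :
    ∃ C : ℝ, 0 ≤ C ∧ ∀ x ∈ s,
      |f x - iteratedDeriv n f x₀ / n.factorial * (x - x₀) ^ n| ≤ C * |x - x₀| ^ (n + 1) := by
  have hcont : ContinuousOn (iteratedFDeriv ℝ (n + 1) f) s := fun x hx =>
    ((hf x hx).continuousAt_iteratedFDeriv le_rfl).continuousWithinAt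
  obtain ⟨B, hB⟩ := hs.exists_bound_of_continuousOn hcont
  have hB0 : 0 ≤ B := (norm_nonneg _).trans (hB x₀ hx₀)
  refine ⟨B / (n + 1).factorial, by positivity, fun x hx => ?_⟩
  have hfn : ContDiffAt ℝ n f x₀ := (hf x₀ hx₀).of_le (by simp)
  rcases eq_or_ne x₀ x with rfl | hne
  · rw [← taylorWithinEval_eq_monomial uniqueDiffOn_univ (Set.mem_univ x₀) hfn hder,
      taylorWithinEval_self, sub_self, abs_zero]
    positivity
  have hsub : Set.uIcc x₀ x ⊆ s := Set.OrdConnected.uIcc_subset ‹_› hx₀ hx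
  obtain ⟨y, hy, hfy⟩ := taylor_mean_remainder_lagrange_iteratedDeriv hne
    fun z hz => (hf z (hsub hz)).contDiffWithinAt
  have hbound := hB y (hsub (Set.uIoo_subset_uIcc_self hy))
  rw [norm_iteratedFDeriv_eq_norm_iteratedDeriv, Real.norm_eq_abs] at hbound
  rw [← taylorWithinEval_eq_monomial (uniqueDiffOn_uIcc hne) Set.left_mem_uIcc hfn hder,
    hfy, abs_div, abs_mul, abs_pow, Nat.abs_cast, mul_div_right_comm]
  gcongr

end Taylor

lemma exists_abs_meanDrop_sub_monomial_le (J h : ℝ) {n : ℕ} {m₀ : ℝ}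
    (hm₀ : m₀ ∈ Set.Icc (0 : ℝ) 1) (hder : ∀ l < n, iteratedDeriv l (Lone J h) m₀ = 0) :
    ∃ C : ℝ, ∀ N : ℕ, N ≠ 0 → ∀ σ : Config N,
      |meanDrop J h N (mConf σ) -
          iteratedDeriv n (Lone J h) m₀ / n.factorial * (mConf σ - m₀) ^ n| ≤
        C * (|mConf σ - m₀| ^ (n + 1) + 1 / N) := by
  obtain ⟨C₁, hC₁, hdrop⟩ := exists_abs_meanDrop_sub_Lone_le J h
  obtain ⟨C₂, hC₂, htaylor⟩ := exists_abs_sub_monomial_le isCompact_Icc hm₀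
    (fun _ hm => contDiffAt_Lone J h (n + 1) hm.2) hder
  refine ⟨C₁ + C₂, fun N hN σ => (abs_sub_le _ (Lone J h (mConf σ)) _).trans ?_⟩
  calc _ ≤ C₁ / N + C₂ * |mConf σ - m₀| ^ (n + 1) :=
        add_le_add (hdrop N hN σ) (htaylor _ (mConf_mem_Icc σ))
    _ ≤ C₁ / N + C₂ * |mConf σ - m₀| ^ (n + 1) +
          (C₁ * |mConf σ - m₀| ^ (n + 1) + C₂ / N) := le_add_of_nonneg_right (by positivity)
    _ = (C₁ + C₂) * (|mConf σ - m₀| ^ (n + 1) + 1 / N) := by ring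

lemma abs_div_pow_sub_le {t y D c C : ℝ} {n : ℕ} (ht : 0 < t)
    (hD : |D - c * y ^ n| ≤ C * (|y| ^ (n + 1) + 1 / t ^ (n + 1))) :
    |D / t ^ n - c / t ^ (2 * n) * (y * t) ^ n| ≤
      C / t ^ (2 * n + 1) * (|y * t| ^ (n + 1) + 1) := by
  have hleft : D / t ^ n - c / t ^ (2 * n) * (y * t) ^ n = (D - c * y ^ n) / t ^ n := by
    rw [mul_pow, two_mul, pow_add]
    field_simp
  have hright : C / t ^ (2 * n + 1) * (|y * t| ^ (n + 1) + 1) =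
      C * (|y| ^ (n + 1) + 1 / t ^ (n + 1)) / t ^ n := by
    rw [abs_mul, abs_of_pos ht, mul_pow, two_mul, add_assoc, pow_add t n (n + 1)]
    field_simp
  rw [hleft, hright, abs_div, abs_of_pos (pow_pos ht n)]
  gcongr

theorem stmt7_general (J h : ℝ) (n : ℕ) (m₀ : ℝ) (hm₀ : m₀ ∈ Set.Icc (0 : ℝ) 1)
    (hder : ∀ l < n, iteratedDeriv l (Lone J h) m₀ = 0) :
    ∃ K : ℝ, ∀ N : ℕ, 1 ≤ N →
      let W : Config N → ℝ :=
        fun σ => ((Msum σ : ℝ) - N * m₀) / (N : ℝ) ^ ((n : ℝ) / (n + 1))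
      ∃ r : ℝ → ℝ, ∀ σ : Config N, wConf N J h σ ≠ 0 →
        condE2 N J h (fun σ σ' => W σ - W σ') σ =
            iteratedDeriv n (Lone J h) m₀ /
              ((n.factorial : ℝ) * (N : ℝ) ^ (2 * (n : ℝ) / (n + 1))) * W σ ^ n + r (W σ) ∧
          |r (W σ)| ≤ K / (N : ℝ) ^ ((2 * (n : ℝ) + 1) / (n + 1)) * (|W σ| ^ (n + 1) + 1) := by
  obtain ⟨K, hK⟩ := exists_abs_meanDrop_sub_monomial_le J h hm₀ hder
  refine ⟨K, fun N hN => ?_⟩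
  have hN0 : N ≠ 0 := Nat.one_le_iff_ne_zero.1 hN
  obtain ⟨t, ht, htpow⟩ : ∃ t : ℝ, 0 < t ∧ ∀ j : ℕ, (N : ℝ) ^ ((j : ℝ) / (n + 1)) = t ^ j :=
    ⟨(N : ℝ) ^ (1 / ((n : ℝ) + 1)), by positivity, fun j => by
      rw [← one_div_mul_eq_div, rpow_mul_natCast N.cast_nonneg]⟩
  have htN : t ^ (n + 1) = N := by
    rw [← htpow, Nat.cast_add_one, div_self (by positivity), rpow_one]
  have hcoeff := htpow (2 * n)
  have herror := htpow (2 * n + 1)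
  push_cast at hcoeff herror
  rw [htpow, hcoeff, herror]
  intro W
  set c := iteratedDeriv n (Lone J h) m₀
  refine ⟨fun w => meanDrop J h N (m₀ + w / t) / t ^ n - c / (n.factorial * t ^ (2 * n)) * w ^ n,
    fun σ hσ => ?_⟩
  have hW : W σ = (mConf σ - m₀) * t := by
    simp only [W, mConf, ← htN]
    field_simp
    ring
  have hm : m₀ + W σ / t = mConf σ := by
    rw [hW, mul_div_cancel_right₀ _ ht.ne', add_sub_cancel]
  have hcond : condE2 N J h (fun σ σ' => W σ - W σ') σ = meanDrop J h N (mConf σ) / t ^ n := by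
    rw [← condE2_Msum hN0 hσ, ← condE2_div]
    congr! 3
    simp only [W]
    ring
  refine ⟨by simp only [hcond, hm, add_sub_cancel], ?_⟩
  simp only [hm]
  rw [hW, ← div_div]
  exact abs_div_pow_sub_le ht (htN ▸ hK N hN0 σ)

/-- Stein linearization of the first conditional moment: with
`W = (M - N m₀)/N^{(2k+1)/(2k+2)}`, one has `E[W - W' | σ] = g(W) + r(W)` where
`g(W) = L₁^{(2k+1)}(m₀) W^{2k+1}/((2k+1)! N^{(2k+1)/(k+1)})` and
`|r(W)| ≤ K N^{-(4k+3)/(2k+2)} (W^{2k+2} + 1)`. -/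
theorem stmt7 (J h : ℝ) (hJ : 0 ≤ J) (k : ℕ) (hk : k = 0 ∨ k = 1)
    (m₀ : ℝ) (hm₀ : m₀ ∈ Set.Icc (0:ℝ) 1)
    (hmax : ∀ m ∈ Set.Icc (0:ℝ) 1, ptilde J h m ≤ ptilde J h m₀)
    (huniq : ∀ m ∈ Set.Icc (0:ℝ) 1, ptilde J h m = ptilde J h m₀ → m = m₀)
    (hder0 : ∀ l : ℕ, l ≤ 2*k → iteratedDeriv l (Lone J h) m₀ = 0)
    (hderpos : 0 < iteratedDeriv (2*k+1) (Lone J h) m₀) :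
    ∃ K : ℝ, ∀ N : ℕ, 1 ≤ N →
      let W : Config N → ℝ :=
        fun σ => ((Msum σ : ℝ) - N * m₀) / (N:ℝ) ^ ((2*(k:ℝ)+1)/(2*(k:ℝ)+2))
      ∃ r : ℝ → ℝ, ∀ σ : Config N, wConf N J h σ ≠ 0 →
        condE2 N J h (fun σ σ' => W σ - W σ') σ
            = iteratedDeriv (2*k+1) (Lone J h) m₀ /
                ((Nat.factorial (2*k+1) : ℝ) * (N:ℝ) ^ ((2*(k:ℝ)+1)/((k:ℝ)+1)))
                * (W σ)^(2*k+1)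
              + r (W σ) ∧
        |r (W σ)| ≤ K / (N:ℝ) ^ ((4*(k:ℝ)+3)/(2*(k:ℝ)+2)) * ((W σ)^(2*k+2) + 1) := by
  have hden : ((2 * k + 1 : ℕ) : ℝ) + 1 = 2 * k + 2 := by push_cast; ring
  have hcoeff : 2 * ((2 * k + 1 : ℕ) : ℝ) / (2 * k + 2) = (2 * k + 1) / (k + 1) := by
    push_cast; field_simp
  have herror : 2 * ((2 * k + 1 : ℕ) : ℝ) + 1 = 4 * k + 3 := by push_cast; ring
  have hgeneral := stmt7_general J h (2 * k + 1) m₀ hm₀ fun l hl => hder0 l (Nat.le_of_lt_succ hl)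
  simp only [hden, hcoeff, herror, (by grind : Even (2 * k + 1 + 1)).pow_abs] at hgeneral
  exact_mod_cast hgeneral
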